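/- arXiv:2407.05251 — 3 statements merged into one kernel-verified Lean document; each statement's English description precedes it below -/
import Mathlib

section
/- Let a group G act freely by homeomorphisms on a compact Hausdorff space X with every G-orbit dense (i.e., the action is free and minimal), let C ⊆ X be a compact set that meets every G-orbit at most once, and let O ⊆ X be a nonempty open set. Then C ≺ O (dynamical subequivalence). -/
/-- Dynamical subequivalence `K ≺ O`: there are finitely many open sets `U_1, …, U_n`
and group elements `g_1, …, g_n` with `K ⊆ ⋃ U_i`, the translates `g_i • U_i`
pairwise disjoint, and `⋃ g_i • U_i ⊆ O`. -/
def DynSubeq (G : Type*) [Group G] {X : Type*} [TopologicalSpace X] [MulAction G X]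
    (K O : Set X) : Prop :=
  ∃ (n : ℕ) (U : Fin n → Set X) (g : Fin n → G),
    (∀ i, IsOpen (U i)) ∧ K ⊆ ⋃ i, U i ∧
    (Pairwise fun i j => Disjoint ((g i • ·) '' U i) ((g j • ·) '' U j)) ∧
    (⋃ i, (g i • ·) '' U i) ⊆ O

/-!
The translates of `C` by distinct group elements are disjoint. By compactness, finitely many
`g ∈ G` suffice to move each point of `C` into `O`, and the finitely many compact translates `g • C`
can be separated simultaneously: `C` has an open neighbourhood `W` whose translates by these `g`
are still pairwise disjoint. The open sets `W ∩ g⁻¹ • O` then witness `C ≺ O`.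
-/

open Set Topology

theorem exists_isOpen_superset_pairwise_disjoint_image {ι X Y : Type*} [Finite ι]
    [TopologicalSpace X] [TopologicalSpace Y] [T2Space Y] {f : ι → X → Y}
    (hf : ∀ i, Continuous (f i)) {K : Set X} (hK : IsCompact K)
    (hdisj : Pairwise fun i j => Disjoint (f i '' K) (f j '' K)) :
    ∃ W, IsOpen W ∧ K ⊆ W ∧ Pairwise fun i j => Disjoint (f i '' W) (f j '' W) := by
  have hnhds : Pairwise fun i j => Disjoint (𝓝ˢ (f i '' K)) (𝓝ˢ (f j '' K)) := fun i j hij =>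
    (SeparatedNhds.of_isCompact_isCompact (hK.image (hf i)) (hK.image (hf j))
      (hdisj hij)).disjoint_nhdsSet
  obtain ⟨V, hV, hVdisj⟩ :=
    hnhds.exists_mem_filter_basis_of_disjoint fun i => hasBasis_nhdsSet (f i '' K)
  refine ⟨⋂ i, f i ⁻¹' V i, isOpen_iInter_of_finite fun i => (hV i).1.preimage (hf i),
    subset_iInter fun i => image_subset_iff.1 (hV i).2, fun i j hij => ?_⟩
  exact (hVdisj hij).mono (image_subset_iff.2 (iInter_subset _ i))
    (image_subset_iff.2 (iInter_subset _ j))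

section Action

variable {G X : Type*} [Group G] [MulAction G X] {C O : Set X}

theorem pairwise_disjoint_image_smul (hfree : ∀ x ∈ C, ∀ g : G, g • x = x → g = 1)
    (hC : ∀ x ∈ C, ∀ y ∈ C, (∃ g : G, y = g • x) → x = y) :
    Pairwise fun g h : G => Disjoint ((g • ·) '' C) ((h • ·) '' C) := by
  refine fun g h hgh => disjoint_left.2 ?_
  rintro _ ⟨x, hx, rfl⟩ ⟨y, hy, hyx : h • y = g • x⟩
  have hy_eq : y = (h⁻¹ * g) • x := by rw [mul_smul, ← hyx, inv_smul_smul]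
  have hfix : (h⁻¹ * g) • x = x := hy_eq ▸ (hC x hx y hy ⟨_, hy_eq⟩).symm
  exact hgh (inv_mul_eq_one.1 (hfree x hx _ hfix)).symm

variable [TopologicalSpace X]

theorem DynSubeq.of_finite {ι : Type*} [Finite ι] {U : ι → Set X} {g : ι → G}
    (hU : ∀ i, IsOpen (U i)) (hcover : C ⊆ ⋃ i, U i)
    (hdisj : Pairwise fun i j => Disjoint ((g i • ·) '' U i) ((g j • ·) '' U j))
    (hsub : ⋃ i, (g i • ·) '' U i ⊆ O) : DynSubeq G C O := by
  obtain ⟨n, ⟨e⟩⟩ := Finite.exists_equiv_fin ι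
  refine ⟨n, U ∘ e.symm, g ∘ e.symm, fun i => hU _, ?_,
    fun i j hij => hdisj (e.symm.injective.ne hij), ?_⟩
  · exact hcover.trans_eq (e.symm.surjective.iUnion_comp U).symm
  · exact (e.symm.surjective.iUnion_comp fun i => (g i • ·) '' U i).trans_subset hsub

theorem stmt_10_general [T2Space X] [ContinuousConstSMul G X] (hCcpt : IsCompact C)
    (hfree : ∀ x ∈ C, ∀ g : G, g • x = x → g = 1)
    (hC : ∀ x ∈ C, ∀ y ∈ C, (∃ g : G, y = g • x) → x = y)
    (hOopen : IsOpen O) (hhit : ∀ x ∈ C, ∃ g : G, g • x ∈ O) : DynSubeq G C O := by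
  have hpre (g : G) : IsOpen ((g • ·) ⁻¹' O) := hOopen.preimage (continuous_const_smul g)
  obtain ⟨s, hs⟩ := hCcpt.elim_finite_subcover (fun g : G => (g • ·) ⁻¹' O) hpre
    fun x hx => mem_iUnion.2 (hhit x hx)
  obtain ⟨W, hWopen, hCW, hWdisj⟩ := exists_isOpen_superset_pairwise_disjoint_image
    (f := fun (g : s) (x : X) => (g : G) • x) (fun g => continuous_const_smul (g : G)) hCcpt
    ((pairwise_disjoint_image_smul hfree hC).comp_of_injective Subtype.val_injective)
  refine .of_finite (U := fun g : s => W ∩ ((g : G) • ·) ⁻¹' O) (g := Subtype.val)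
    (fun g => hWopen.inter (hpre g)) ?_ ?_ ?_
  · intro x hx
    obtain ⟨g, hg, hgx⟩ := mem_iUnion₂.1 (hs hx)
    exact mem_iUnion.2 ⟨⟨g, hg⟩, hCW hx, hgx⟩
  · exact fun g h hgh =>
      (hWdisj hgh).mono (image_mono inter_subset_left) (image_mono inter_subset_left)
  · exact iUnion_subset fun g => image_subset_iff.2 inter_subset_right

end Action

/-- If a group `G` acts freely and minimally by homeomorphisms on a compact Hausdorff
space `X`, `C` is a compact set meeting every `G`-orbit at most once, and `O` is a
nonempty open set, then `C ≺ O`. -/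
theorem stmt_10 {G X : Type*} [Group G] [TopologicalSpace X] [CompactSpace X]
    [T2Space X] [MulAction G X]
    (hcont : ∀ g : G, Continuous (fun x : X => g • x))
    (hfree : ∀ (g : G) (x : X), g • x = x → g = 1)
    (hmin : ∀ x : X, Dense (Set.range fun g : G => g • x))
    (C : Set X) (hCcpt : IsCompact C)
    (hC : ∀ x ∈ C, ∀ y ∈ C, (∃ g : G, y = g • x) → x = y)
    (O : Set X) (hOopen : IsOpen O) (hOne : O.Nonempty) :
    DynSubeq G C O := by
  have : ContinuousConstSMul G X := ⟨hcont⟩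
  exact stmt_10_general hCcpt (fun x _ g => hfree g x) hC hOopen fun x _ =>
    exists_range_iff.1 ((hmin x).exists_mem_open hOopen hOne)
end

section
/- Let a group G act by homeomorphisms on a compact Hausdorff space X without isolated points, with every G-orbit dense in X. If C ⊆ X is a compact set that meets every G-orbit at most once, then C has empty interior. -/
/-!
If an open set `U` meets a dense set only at `x`, then `U ⊆ closure {x}`. When each orbit meets `C`
at most once, this applies to `U = interior C` and the dense orbit of every `x ∈ U`. So any two
points of `U` lie in each other's closure, hence coincide, and `U` is empty or an isolated point.
-/

theorem subset_closure_singleton_of_dense {X : Type*} [TopologicalSpace X] {U s : Set X} {x : X}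
    (hU : IsOpen U) (hs : Dense s) (hUs : U ∩ s ⊆ {x}) : U ⊆ closure {x} :=
  (hs.open_subset_closure_inter hU).trans (closure_mono hUs)

theorem subsingleton_of_forall_subset_closure_singleton {X : Type*} [TopologicalSpace X]
    [T0Space X] {U : Set X} (hU : ∀ x ∈ U, U ⊆ closure {x}) : U.Subsingleton := by
  intro x hx y hy
  have hxy : x ⤳ y := specializes_iff_mem_closure.mpr (hU x hx hy)
  have hyx : y ⤳ x := specializes_iff_mem_closure.mpr (hU y hy hx)
  exact (hxy.antisymm hyx).eq

theorem stmt_11_general {G X : Type*} [TopologicalSpace X] [T0Space X] [SMul G X]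
    (hnoiso : ∀ x : X, ¬ IsOpen ({x} : Set X))
    (hmin : ∀ x : X, Dense (Set.range fun g : G => g • x))
    (C : Set X) (hC : ∀ x ∈ C, ∀ y ∈ C, (∃ g : G, y = g • x) → x = y) :
    interior C = ∅ := by
  have interior_subset_closure : ∀ x ∈ interior C, interior C ⊆ closure {x} := by
    intro x hx
    refine subset_closure_singleton_of_dense isOpen_interior (hmin x) ?_
    rintro y ⟨hy, g, hgx⟩
    exact (hC x (interior_subset hx) y (interior_subset hy) ⟨g, hgx.symm⟩).symm
  have interior_subsingleton : (interior C).Subsingleton :=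
    subsingleton_of_forall_subset_closure_singleton interior_subset_closure
  obtain h_empty | ⟨x, h_singleton⟩ := interior_subsingleton.eq_empty_or_singleton
  · exact h_empty
  · exact absurd (h_singleton ▸ isOpen_interior) (hnoiso x)

/-- If a group `G` acts minimally by homeomorphisms on a compact Hausdorff space `X`
without isolated points, then every compact set meeting each `G`-orbit at most once
has empty interior. -/
theorem stmt_11 {G X : Type*} [Group G] [TopologicalSpace X] [CompactSpace X]
    [T2Space X] [MulAction G X]
    (hnoiso : ∀ x : X, ¬ IsOpen ({x} : Set X))
    (hcont : ∀ g : G, Continuous (fun x : X => g • x))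
    (hmin : ∀ x : X, Dense (Set.range fun g : G => g • x))
    (C : Set X) (hCcpt : IsCompact C)
    (hC : ∀ x ∈ C, ∀ y ∈ C, (∃ g : G, y = g • x) → x = y) :
    interior C = ∅ :=
  stmt_11_general hnoiso hmin C hC
end

section
/- Let a group G act by homeomorphisms on a compact Hausdorff space X without isolated points, with every G-orbit dense in X, and let (C_n)_{n ∈ ℕ} be a sequence of compact subsets of X, each of which meets every G-orbit at most once. Then no nonempty open subset of X is contained in ⋃_{n ∈ ℕ} C_n. -/
/-!
In a `T1` space without isolated points, a dense set stays dense after removing finitely many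
points, so a closed set meeting some dense set in finitely many points is nowhere dense. An orbit
is such a dense set for every `C n`, and the Baire category theorem concludes.
-/

open scoped Topology

section DenseSets

variable {X : Type*} [TopologicalSpace X] [T1Space X]

theorem isNowhereDense_of_dense_of_finite_inter [∀ x : X, (𝓝[≠] x).NeBot] {C D : Set X}
    (hC : IsClosed C) (hD : Dense D) (hfin : (D ∩ C).Finite) : IsNowhereDense C := by
  have hdiff : Dense (D \ C) := Set.sdiff_self_inter ▸ hD.sdiff_finite hfin
  rw [hC.isNowhereDense_iff, interior_eq_empty_iff_dense_compl]
  exact hdiff.mono fun _ hx ↦ hx.2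

theorem stmt_12_general [BaireSpace X] {ι : Type*} [Countable ι]
    (hnoiso : ∀ x : X, ¬ IsOpen ({x} : Set X)) {C D : ι → Set X}
    (hC : ∀ i, IsClosed (C i)) (hD : ∀ i, Dense (D i)) (hfin : ∀ i, (D i ∩ C i).Finite) :
    ∀ U : Set X, IsOpen U → U.Nonempty → ¬ U ⊆ ⋃ i, C i := by
  intro U hU hne hsub
  have : ∀ x : X, (𝓝[≠] x).NeBot := fun x ↦
    ⟨fun h ↦ hnoiso x ((isOpen_singleton_iff_punctured_nhds x).2 h)⟩
  have hmeagre : IsMeagre (⋃ i, C i) := isMeagre_iUnion fun i ↦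
    (isNowhereDense_of_dense_of_finite_inter (hC i) (hD i) (hfin i)).isMeagre
  exact not_isMeagre_of_isOpen hU hne (hmeagre.mono hsub)

end DenseSets

theorem orbit_inter_subsingleton {G X : Type*} [Group G] [MulAction G X] {C : Set X}
    (hC : ∀ x ∈ C, ∀ y ∈ C, (∃ g : G, y = g • x) → x = y) (x : X) :
    (MulAction.orbit G x ∩ C).Subsingleton := by
  rintro _ ⟨⟨g, rfl⟩, hgC⟩ _ ⟨⟨h, rfl⟩, hhC⟩
  exact hC _ hgC _ hhC ⟨h * g⁻¹, by simp [mul_smul]⟩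

/-- If a group `G` acts minimally by homeomorphisms on a compact Hausdorff space `X`
without isolated points and `(C_n)` is a sequence of compact sets, each meeting every
`G`-orbit at most once, then no nonempty open set is contained in `⋃ n, C n`. -/
theorem stmt_12 {G X : Type*} [Group G] [TopologicalSpace X] [CompactSpace X]
    [T2Space X] [MulAction G X]
    (hnoiso : ∀ x : X, ¬ IsOpen ({x} : Set X))
    (hcont : ∀ g : G, Continuous (fun x : X => g • x))
    (hmin : ∀ x : X, Dense (Set.range fun g : G => g • x))
    (C : ℕ → Set X) (hCcpt : ∀ n, IsCompact (C n))
    (hC : ∀ n, ∀ x ∈ C n, ∀ y ∈ C n, (∃ g : G, y = g • x) → x = y) :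
    ∀ U : Set X, IsOpen U → U.Nonempty → ¬ U ⊆ ⋃ n, C n := by
  rintro U hU ⟨x, hxU⟩
  exact stmt_12_general hnoiso (fun n ↦ (hCcpt n).isClosed) (fun _ ↦ hmin x)
    (fun n ↦ (orbit_inter_subsingleton (hC n) x).finite) U hU ⟨x, hxU⟩
end
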